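/- Let 0 < σ < 1, let P be a real homogeneous polynomial of even degree 2k in n variables with P ≠ 0, and let ε be a nonzero real number with |ε| ≤ K(σ,P)⁻¹. Then the probability measure μ on ℝⁿ with density f(·;ε,σ,P) is not Gaussian: there is no mean vector m ∈ ℝⁿ and positive semidefinite matrix Σ such that the characteristic function of μ equals t ↦ exp(i mᵀt − tᵀΣt/2); equivalently, Φ(t;ε,σ,P) = e^{-|t|²/2} + ε e^{-σ²|t|²/2} P(t) is not the characteristic function of any Gaussian measure on ℝⁿ. -/

import Mathlib

open MeasureTheory Real ProbabilityTheory

noncomputable def hermiteR (m : ℕ) (x : ℝ) : ℝ :=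
  Polynomial.aeval x (Polynomial.hermite m)

noncomputable def renorm {n : ℕ} (P : MvPolynomial (Fin n) ℝ) (x : Fin n → ℝ) : ℝ :=
  ∑ m ∈ P.support, P.coeff m * ∏ i, hermiteR (m i) (x i)

noncomputable def Kconst (n k : ℕ) (σ : ℝ) (P : MvPolynomial (Fin n) ℝ) : ℝ :=
  ⨆ x : Fin n → ℝ, (σ ^ (n + 2*k))⁻¹ * |renorm P x| * Real.exp (-(1 - σ^2) * (∑ i, x i ^ 2) / 2)

noncomputable def fdens (n k : ℕ) (σ ε : ℝ) (P : MvPolynomial (Fin n) ℝ) (x : Fin n → ℝ) : ℝ :=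
  (2*π)^(-(n:ℝ)/2) * Real.exp (-(∑ i, x i ^ 2)/2) *
    (1 + (-1)^k * ε * (σ^(n+2*k))⁻¹ * renorm P (fun i => x i / σ) *
      Real.exp (-(1-σ^2) * (∑ i, x i ^ 2) / (2*σ^2)))

noncomputable def gdens (n k : ℕ) (σ ε : ℝ) (P : MvPolynomial (Fin n) ℝ) (a : Fin n → ℝ) (x : ℝ) : ℝ :=
  (2*π)^(-(1:ℝ)/2) * (Real.exp (-x^2/2) +
    (-1)^k * ε * MvPolynomial.eval a P * (σ^(2*k+1))⁻¹ * hermiteR (2*k) (x/σ) * Real.exp (-x^2/(2*σ^2)))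

/-! Integration by parts turns the recursion `(He_m e^{-x²/2})' = -He_{m+1} e^{-x²/2}` into
`∫ e^{itx} He_m(x) e^{-x²/2} dx = √(2π) (it)^m e^{-t²/2}`. Tensorising and rescaling, the density `f`
has Fourier transform `Φ(t) = e^{-|t|²/2} + ε e^{-σ²|t|²/2} P(t)`. If `Φ` were Gaussian, then along a
ray `t = s a` with `P(a) ≠ 0`, multiplication by `e^{σ²|t|²/2}` would give
`|e^{-Bs²} + c s^{2k}| = e^{Ds²}` with `B ≥ 0` and `c ≠ 0`. For `k ≠ 0` the growth as `s → ∞` forbids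
this; for `k = 0` already `Φ(0) = 1 + ε P(0) ≠ 1`. -/

section OscillatoryIntegrals

theorem integrable_cexp_I_mul {α : Type*} [MeasurableSpace α] {μ : Measure α} {f : α → ℂ}
    {g : α → ℝ} (hf : Integrable f μ) (hg : AEStronglyMeasurable g μ) :
    Integrable (fun x => Complex.exp (Complex.I * (g x : ℂ)) * f x) μ := by
  refine hf.bdd_mul (c := 1) ?_ (ae_of_all _ fun x => ?_)
  · exact (by fun_prop : Continuous fun y : ℝ => Complex.exp (Complex.I * (y : ℂ)))
      |>.comp_aestronglyMeasurable hg
  · rw [mul_comm, Complex.norm_exp_ofReal_mul_I]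

theorem integrable_cexp_sum_mul {ι : Type*} [Fintype ι] {f : (ι → ℝ) → ℂ} (hf : Integrable f)
    (t : ι → ℝ) :
    Integrable fun x : ι → ℝ => Complex.exp (Complex.I * ((∑ i, t i * x i : ℝ) : ℂ)) * f x :=
  integrable_cexp_I_mul hf
    (by fun_prop : Continuous fun x : ι → ℝ => ∑ i, t i * x i).aestronglyMeasurable

theorem integral_cexp_mul_deriv {f f' : ℝ → ℂ} (hderiv : ∀ x, HasDerivAt f (f' x) x)
    (hf : Integrable f) (hf' : Integrable f') (t : ℝ) :
    ∫ x : ℝ, Complex.exp (Complex.I * (t * x : ℝ)) * f' x =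
      -(Complex.I * t) * ∫ x : ℝ, Complex.exp (Complex.I * (t * x : ℝ)) * f x := by
  have hexp (x : ℝ) : HasDerivAt (fun x : ℝ => Complex.exp (Complex.I * (t * x : ℝ)))
      (Complex.I * t * Complex.exp (Complex.I * (t * x : ℝ))) x := by
    have hphase : HasDerivAt (fun x : ℝ => Complex.I * ((t * x : ℝ) : ℂ)) (Complex.I * t) x := by
      simpa using ((hasDerivAt_id x).const_mul t).ofReal_comp.const_mul Complex.I
    simpa only [mul_comm] using hphase.cexp
  have hphase_meas : AEStronglyMeasurable (fun x : ℝ => t * x) := by fun_prop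
  have hint := integrable_cexp_I_mul hf hphase_meas
  rw [integral_mul_deriv_eq_deriv_mul_of_integrable (fun x _ => hexp x) (fun x _ => hderiv x)
    (integrable_cexp_I_mul hf' hphase_meas)
    (by simpa only [Pi.mul_def, mul_assoc] using hint.const_mul (Complex.I * t)) hint]
  simp only [mul_assoc, integral_const_mul, neg_mul]

theorem integral_cexp_mul_prod {ι : Type*} [Fintype ι] (f : ι → ℝ → ℂ) (t : ι → ℝ) :
    ∫ x : ι → ℝ, Complex.exp (Complex.I * ((∑ i, t i * x i : ℝ) : ℂ)) * ∏ i, f i (x i) =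
      ∏ i, ∫ x : ℝ, Complex.exp (Complex.I * (t i * x : ℝ)) * f i x := by
  rw [← integral_fintype_prod_volume_eq_prod
    (fun i (x : ℝ) => Complex.exp (Complex.I * (t i * x : ℝ)) * f i x)]
  simp only [Complex.ofReal_sum, Finset.mul_sum, Complex.exp_sum, Finset.prod_mul_distrib]

theorem integral_cexp_mul_comp_div {ι : Type*} [Fintype ι] (g : (ι → ℝ) → ℂ) {σ : ℝ} (hσ : σ ≠ 0)
    (t : ι → ℝ) :
    ∫ x : ι → ℝ, Complex.exp (Complex.I * ((∑ i, t i * x i : ℝ) : ℂ)) * g (fun i => x i / σ) =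
      ((|σ| ^ Fintype.card ι : ℝ) : ℂ) *
        ∫ x : ι → ℝ, Complex.exp (Complex.I * ((∑ i, σ * t i * x i : ℝ) : ℂ)) * g x := by
  have hscale := Measure.integral_comp_inv_smul volume
    (fun x : ι → ℝ => Complex.exp (Complex.I * ((∑ i, σ * t i * x i : ℝ) : ℂ)) * g x) σ
  rw [Module.finrank_fintype_fun_eq_card, abs_pow, Complex.real_smul] at hscale
  rw [← hscale]
  refine integral_congr_ae (ae_of_all _ fun x => ?_)
  have hphase (i : ι) : σ * t i * (σ⁻¹ * x i) = t i * x i := by field_simp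
  simp only [Pi.smul_def, smul_eq_mul, hphase, div_eq_inv_mul]

end OscillatoryIntegrals

section HermiteGaussian

/-- The Hermite function `He_m(x) e^{-x²/2}`: up to the sign `(-1)^m`, the `m`-th derivative of the
Gaussian `e^{-x²/2}`. -/
noncomputable def hermiteGaussian (m : ℕ) (x : ℝ) : ℝ := hermiteR m x * Real.exp (-x ^ 2 / 2)

@[simp]
theorem hermiteR_zero (x : ℝ) : hermiteR 0 x = 1 := by simp [hermiteR]

theorem continuous_hermiteR (m : ℕ) : Continuous (hermiteR m) :=
  Polynomial.continuous_aeval _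

theorem integrable_aeval_mul_exp_neg_mul_sq {R : Type*} [CommSemiring R] [Algebra R ℝ]
    (p : Polynomial R) {b : ℝ} (hb : 0 < b) :
    Integrable fun x : ℝ => Polynomial.aeval x p * Real.exp (-b * x ^ 2) := by
  induction p using Polynomial.induction_on' with
  | add p q hp hq =>
    simp only [map_add, add_mul]
    exact hp.add hq
  | monomial j a =>
    have hj : (-1 : ℝ) < j := neg_one_lt_zero.trans_le j.cast_nonneg
    simpa only [Polynomial.aeval_monomial, Real.rpow_natCast, mul_assoc] using
      (integrable_rpow_mul_exp_neg_mul_sq hb hj).const_mul (algebraMap R ℝ a)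

theorem integrable_hermiteGaussian (m : ℕ) : Integrable (hermiteGaussian m) := by
  refine (integrable_aeval_mul_exp_neg_mul_sq (Polynomial.hermite m) one_half_pos).congr
    (ae_of_all _ fun x => ?_)
  simp only [hermiteGaussian, hermiteR, neg_mul, one_div_mul_eq_div, neg_div]

theorem hasDerivAt_hermiteGaussian (m : ℕ) (x : ℝ) :
    HasDerivAt (hermiteGaussian m) (-hermiteGaussian (m + 1) x) x := by
  have hpoly : HasDerivAt (hermiteR m)
      (Polynomial.aeval x (Polynomial.derivative (Polynomial.hermite m))) x :=
    Polynomial.hasDerivAt_aeval _ _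
  have hexponent : HasDerivAt (fun x : ℝ => -x ^ 2 / 2) (-x) x := by
    convert! (hasDerivAt_pow 2 x).neg.div_const 2 using 1
    ring
  convert! hpoly.mul hexponent.exp using 1
  simp only [hermiteGaussian, hermiteR, Polynomial.hermite_succ, map_sub, map_mul,
    Polynomial.aeval_X]
  ring

theorem integral_cexp_mul_exp_neg_sq_div_two (t : ℝ) :
    ∫ x : ℝ, Complex.exp (Complex.I * (t * x : ℝ)) * (Real.exp (-x ^ 2 / 2) : ℂ) =
      (√(2 * π) * Real.exp (-t ^ 2 / 2) : ℝ) := by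
  have hgauss := fourierIntegral_gaussian (b := 1 / 2) (by norm_num) (t : ℂ)
  convert! hgauss using 1
  · refine integral_congr_ae (ae_of_all _ fun x => ?_)
    push_cast
    ring_nf
  · rw [Real.sqrt_eq_rpow, Complex.ofReal_mul, Complex.ofReal_cpow (by positivity)]
    push_cast
    ring_nf

theorem integral_cexp_mul_hermiteGaussian (m : ℕ) (t : ℝ) :
    ∫ x : ℝ, Complex.exp (Complex.I * (t * x : ℝ)) * (hermiteGaussian m x : ℂ) =
      (Complex.I * t) ^ m * (√(2 * π) * Real.exp (-t ^ 2 / 2) : ℝ) := by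
  induction m with
  | zero =>
    simpa only [hermiteGaussian, hermiteR_zero, one_mul, pow_zero] using
      integral_cexp_mul_exp_neg_sq_div_two t
  | succ m ih =>
    have hderiv (x : ℝ) : HasDerivAt (fun x : ℝ => (hermiteGaussian m x : ℂ))
        (-(hermiteGaussian (m + 1) x : ℂ)) x := by
      simpa using (hasDerivAt_hermiteGaussian m x).ofReal_comp
    have hparts := integral_cexp_mul_deriv hderiv (integrable_hermiteGaussian m).ofReal
      (integrable_hermiteGaussian (m + 1)).ofReal.neg t
    simp only [mul_neg, integral_neg, neg_mul, neg_inj] at hparts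
    rw [hparts, ih]
    ring

end HermiteGaussian

section RenormGaussian

variable {n : ℕ}

/-- The function `:P:(x) e^{-|x|²/2}`, of which the summands of the density `f` are rescalings. -/
noncomputable def renormGaussian (P : MvPolynomial (Fin n) ℝ) (x : Fin n → ℝ) : ℝ :=
  renorm P x * Real.exp (-(∑ i, x i ^ 2) / 2)

theorem continuous_renorm (P : MvPolynomial (Fin n) ℝ) : Continuous (renorm P) :=
  continuous_finsetSum _ fun _ _ => continuous_const.mul <|
    continuous_finsetProd _ fun i _ => (continuous_hermiteR _).comp (continuous_apply i)

theorem renorm_one (x : Fin n → ℝ) : renorm 1 x = 1 := by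
  classical
  simp [renorm, MvPolynomial.support_one, MvPolynomial.coeff_one]

theorem renormGaussian_eq_sum (P : MvPolynomial (Fin n) ℝ) (x : Fin n → ℝ) :
    renormGaussian P x = ∑ m ∈ P.support, P.coeff m * ∏ i, hermiteGaussian (m i) (x i) := by
  simp only [renormGaussian, renorm, hermiteGaussian, Finset.prod_mul_distrib, ← Real.exp_sum,
    Finset.sum_mul, ← Finset.sum_neg_distrib, Finset.sum_div, mul_assoc]

theorem integrable_renormGaussian (P : MvPolynomial (Fin n) ℝ) : Integrable (renormGaussian P) := by
  simp only [funext (renormGaussian_eq_sum P)]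
  exact integrable_finsetSum _ fun m _ =>
    (Integrable.fintype_prod fun i => integrable_hermiteGaussian (m i)).const_mul _

theorem integrable_cexp_mul_renormGaussian_comp_div (P : MvPolynomial (Fin n) ℝ) {σ : ℝ}
    (hσ : σ ≠ 0) (t : Fin n → ℝ) :
    Integrable fun x : Fin n → ℝ => Complex.exp (Complex.I * ((∑ i, t i * x i : ℝ) : ℂ)) *
      (renormGaussian P (fun i => x i / σ) : ℂ) := by
  have hscaled : Integrable fun x : Fin n → ℝ => renormGaussian P (fun i => x i / σ) := by
    simpa only [Pi.smul_def, smul_eq_mul, div_eq_inv_mul] using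
      (integrable_renormGaussian P).comp_smul (inv_ne_zero hσ)
  exact integrable_cexp_sum_mul hscaled.ofReal t

theorem integral_cexp_mul_prod_hermiteGaussian (m : Fin n → ℕ) (t : Fin n → ℝ) :
    ∫ x : Fin n → ℝ, Complex.exp (Complex.I * ((∑ i, t i * x i : ℝ) : ℂ)) *
        ∏ i, (hermiteGaussian (m i) (x i) : ℂ) =
      (∏ i, (Complex.I * t i) ^ m i) *
        (√(2 * π) ^ n * Real.exp (-(∑ i, t i ^ 2) / 2) : ℝ) := by
  rw [integral_cexp_mul_prod fun i x => (hermiteGaussian (m i) x : ℂ)]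
  simp only [integral_cexp_mul_hermiteGaussian, Finset.prod_mul_distrib, ← Complex.ofReal_prod,
    Finset.prod_const, Finset.card_univ, Fintype.card_fin, ← Real.exp_sum,
    ← Finset.sum_neg_distrib, Finset.sum_div]

theorem integral_cexp_mul_renormGaussian (P : MvPolynomial (Fin n) ℝ) (t : Fin n → ℝ) :
    ∫ x : Fin n → ℝ, Complex.exp (Complex.I * ((∑ i, t i * x i : ℝ) : ℂ)) *
        (renormGaussian P x : ℂ) =
      MvPolynomial.aeval (fun i => Complex.I * t i) P *
        (√(2 * π) ^ n * Real.exp (-(∑ i, t i ^ 2) / 2) : ℝ) := by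
  have hint (m : Fin n →₀ ℕ) : Integrable fun x : Fin n → ℝ =>
      Complex.exp (Complex.I * ((∑ i, t i * x i : ℝ) : ℂ)) *
        ∏ i, (hermiteGaussian (m i) (x i) : ℂ) :=
    integrable_cexp_sum_mul
      (Integrable.fintype_prod fun i => (integrable_hermiteGaussian (m i)).ofReal) t
  have hsum (x : Fin n → ℝ) : (renormGaussian P x : ℂ) =
      ∑ m ∈ P.support, ((P.coeff m : ℝ) : ℂ) * ∏ i, (hermiteGaussian (m i) (x i) : ℂ) := by
    simp only [renormGaussian_eq_sum, Complex.ofReal_sum, Complex.ofReal_mul, Complex.ofReal_prod]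
  simp only [hsum, Finset.mul_sum, mul_left_comm (Complex.exp _)]
  rw [integral_finsetSum _ fun m _ => (hint m).const_mul _, MvPolynomial.aeval_def,
    MvPolynomial.eval₂_eq', Finset.sum_mul]
  refine Finset.sum_congr rfl fun m _ => ?_
  rw [integral_const_mul, integral_cexp_mul_prod_hermiteGaussian, mul_assoc]
  simp only [Complex.coe_algebraMap, Complex.ofReal_mul]

end RenormGaussian

theorem aeval_const_mul_of_isHomogeneous {ι R S : Type*} [CommSemiring R] [CommSemiring S]
    [Algebra R S] {P : MvPolynomial ι R} {d : ℕ} (hP : P.IsHomogeneous d) (c : S) (v : ι → S) :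
    MvPolynomial.aeval (fun i => c * v i) P = c ^ d * MvPolynomial.aeval v P := by
  simp only [MvPolynomial.aeval_def, MvPolynomial.eval₂_eq, Finset.mul_sum]
  refine Finset.sum_congr rfl fun m hm => ?_
  have hdeg : ∑ i ∈ m.support, m i = d := (hP.degree_eq_sum_deg_support hm).symm
  simp only [mul_pow, Finset.prod_mul_distrib, Finset.prod_pow_eq_pow_sum, hdeg]
  exact mul_left_comm _ _ _

section NonGaussian

open Filter Asymptotics

theorem isLittleO_pow_exp_mul_sq_atTop (d : ℕ) {D : ℝ} (hD : 0 < D) :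
    (fun s : ℝ => s ^ d) =o[atTop] fun s => Real.exp (D * s ^ 2) := by
  refine (isLittleO_pow_exp_pos_mul_atTop d hD).trans_isBigO (IsBigO.of_bound' ?_)
  filter_upwards [eventually_ge_atTop 1] with s hs
  rw [Real.norm_of_nonneg (Real.exp_nonneg _), Real.norm_of_nonneg (Real.exp_nonneg _)]
  gcongr
  exact le_self_pow₀ hs two_ne_zero

theorem tendsto_abs_exp_mul_sq_sub_pow_atTop {d : ℕ} (hd : d ≠ 0) {c : ℝ} (hc : 0 < c) (D : ℝ) :
    Tendsto (fun s : ℝ => |Real.exp (D * s ^ 2) - c * s ^ d|) atTop atTop := by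
  rcases le_or_gt D 0 with hD | hD
  · have hpow : Tendsto (fun s : ℝ => c * s ^ d - 1) atTop atTop :=
      tendsto_atTop_add_const_right _ (-1) ((tendsto_pow_atTop hd).const_mul_atTop hc)
    refine tendsto_atTop_mono (fun s => ?_) hpow
    have hexp : Real.exp (D * s ^ 2) ≤ 1 :=
      Real.exp_le_one_iff.mpr (mul_nonpos_of_nonpos_of_nonneg hD (sq_nonneg s))
    linarith [neg_abs_le (Real.exp (D * s ^ 2) - c * s ^ d)]
  · have hexp : Tendsto (fun s : ℝ => Real.exp (D * s ^ 2)) atTop atTop :=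
      Real.tendsto_exp_atTop.comp ((tendsto_pow_atTop two_ne_zero).const_mul_atTop hD)
    have hequiv := (IsEquivalent.refl (u := fun s : ℝ => Real.exp (D * s ^ 2))
      (l := atTop)).sub_isLittleO ((isLittleO_pow_exp_mul_sq_atTop d hD).const_mul_left c)
    exact tendsto_abs_atTop_atTop.comp (hequiv.symm.tendsto_atTop hexp)

theorem not_forall_abs_exp_add_pow_eq_exp {d : ℕ} (hd : d ≠ 0) {B c : ℝ} (hB : 0 ≤ B) (hc : c ≠ 0)
    (D : ℝ) :
    ¬ ∀ s : ℝ, |Real.exp (-B * s ^ 2) + c * s ^ d| = Real.exp (D * s ^ 2) := by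
  intro h
  obtain ⟨s, hs_large, hs_nonneg⟩ :=
    (((tendsto_abs_exp_mul_sq_sub_pow_atTop hd (abs_pos.mpr hc) D).eventually_gt_atTop 1).and
      (eventually_ge_atTop 0)).exists
  have hmonomial : |c * s ^ d| = |c| * s ^ d := by
    rw [abs_mul, abs_of_nonneg (pow_nonneg hs_nonneg d)]
  have hexp : Real.exp (-B * s ^ 2) ≤ 1 :=
    Real.exp_le_one_iff.mpr (mul_nonpos_of_nonpos_of_nonneg (neg_nonpos.mpr hB) (sq_nonneg s))
  refine hs_large.not_ge ?_
  calc |Real.exp (D * s ^ 2) - |c| * s ^ d|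
      = |(|Real.exp (-B * s ^ 2) + c * s ^ d| - |c * s ^ d|)| := by rw [h, hmonomial]
    _ ≤ |Real.exp (-B * s ^ 2) + c * s ^ d - c * s ^ d| := abs_abs_sub_abs_le_abs_sub _ _
    _ = Real.exp (-B * s ^ 2) := by rw [add_sub_cancel_right, Real.abs_exp]
    _ ≤ 1 := hexp

theorem norm_cexp_I_mul_sub_div_two (a b : ℝ) :
    ‖Complex.exp (Complex.I * (a : ℂ) - (b : ℂ) / 2)‖ = Real.exp (-b / 2) := by
  rw [Complex.norm_exp, Complex.sub_re, Complex.I_mul_re, Complex.ofReal_im, Complex.div_ofNat_re,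
    Complex.ofReal_re, neg_zero, zero_sub, neg_div]

variable {ι : Type*} [Fintype ι]

/-- The function `Φ(t) = e^{-|t|²/2} + ε e^{-σ²|t|²/2} P(t)`, which is the characteristic function
of the density `f(·;ε,σ,P)`. -/
noncomputable def perturbedCharFun (σ ε : ℝ) (P : MvPolynomial ι ℝ) (t : ι → ℝ) : ℝ :=
  Real.exp (-(∑ i, t i ^ 2) / 2) +
    ε * Real.exp (-σ ^ 2 * (∑ i, t i ^ 2) / 2) * MvPolynomial.eval t P

theorem perturbedCharFun_zero (σ ε : ℝ) (P : MvPolynomial ι ℝ) :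
    perturbedCharFun σ ε P 0 = 1 + ε * MvPolynomial.eval 0 P := by
  simp [perturbedCharFun]

theorem exp_mul_perturbedCharFun_ray {P : MvPolynomial ι ℝ} {d : ℕ} (hP : P.IsHomogeneous d)
    (σ ε s : ℝ) (a : ι → ℝ) :
    Real.exp (σ ^ 2 * (∑ i, a i ^ 2) / 2 * s ^ 2) * perturbedCharFun σ ε P (fun i => s * a i) =
      Real.exp (-((1 - σ ^ 2) * (∑ i, a i ^ 2) / 2) * s ^ 2) +
        ε * MvPolynomial.eval a P * s ^ d := by
  have hsq : ∑ i, (s * a i) ^ 2 = s ^ 2 * ∑ i, a i ^ 2 := by simp only [mul_pow, Finset.mul_sum]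
  have heval : MvPolynomial.eval (fun i => s * a i) P = s ^ d * MvPolynomial.eval a P := by
    simpa only [MvPolynomial.aeval_eq_eval] using aeval_const_mul_of_isHomogeneous hP s a
  have hmain : Real.exp (σ ^ 2 * (∑ i, a i ^ 2) / 2 * s ^ 2) *
      Real.exp (-(s ^ 2 * ∑ i, a i ^ 2) / 2) =
        Real.exp (-((1 - σ ^ 2) * (∑ i, a i ^ 2) / 2) * s ^ 2) := by
    rw [← Real.exp_add]
    ring_nf
  have hcancel : Real.exp (σ ^ 2 * (∑ i, a i ^ 2) / 2 * s ^ 2) *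
      Real.exp (-σ ^ 2 * (s ^ 2 * ∑ i, a i ^ 2) / 2) = 1 := by
    rw [← Real.exp_add, Real.exp_eq_one_iff]
    ring
  rw [perturbedCharFun, hsq, heval]
  linear_combination hmain + ε * (s ^ d * MvPolynomial.eval a P) * hcancel

theorem not_forall_perturbedCharFun_eq_gaussian {σ ε : ℝ} (hσ : σ ^ 2 ≤ 1) (hε : ε ≠ 0)
    {P : MvPolynomial ι ℝ} {d : ℕ} (hP : P.IsHomogeneous d) (hP0 : P ≠ 0) (m : ι → ℝ)
    (S : Matrix ι ι ℝ) :
    ¬ ∀ t : ι → ℝ, (perturbedCharFun σ ε P t : ℂ) =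
      Complex.exp (Complex.I * ((∑ i, m i * t i : ℝ) : ℂ)
        - ((∑ i, ∑ j, t i * S i j * t j : ℝ) : ℂ) / 2) := by
  intro h
  obtain ⟨a, ha⟩ : ∃ a, MvPolynomial.eval a P ≠ 0 := by
    by_contra! hzero
    exact hP0 (MvPolynomial.funext fun a => by rw [hzero a, map_zero])
  rcases eq_or_ne d 0 with rfl | hd
  · have heval : MvPolynomial.eval 0 P = MvPolynomial.eval a P := by
      simpa [MvPolynomial.aeval_eq_eval, ← Pi.zero_def] using
        aeval_const_mul_of_isHomogeneous hP 0 a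
    have h0 : perturbedCharFun σ ε P 0 = 1 := by simpa using h 0
    rw [perturbedCharFun_zero, heval, add_eq_left] at h0
    exact mul_ne_zero hε ha h0
  · have hB : 0 ≤ (1 - σ ^ 2) * (∑ i, a i ^ 2) / 2 :=
      div_nonneg (mul_nonneg (sub_nonneg.mpr hσ) (Finset.sum_nonneg fun i _ => sq_nonneg (a i)))
        zero_le_two
    refine not_forall_abs_exp_add_pow_eq_exp hd hB (mul_ne_zero hε ha)
      ((σ ^ 2 * (∑ i, a i ^ 2) - ∑ i, ∑ j, a i * S i j * a j) / 2) fun s => ?_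
    have hquad : ∑ i, ∑ j, s * a i * S i j * (s * a j) =
        s ^ 2 * ∑ i, ∑ j, a i * S i j * a j := by
      simp only [Finset.mul_sum]
      exact Finset.sum_congr rfl fun i _ => Finset.sum_congr rfl fun j _ => by ring
    rw [← exp_mul_perturbedCharFun_ray hP, abs_mul, Real.abs_exp, ← Real.norm_eq_abs,
      ← Complex.norm_real, h, norm_cexp_I_mul_sub_div_two, hquad, ← Real.exp_add]
    ring_nf

end NonGaussian

section Density

variable {n : ℕ} {σ : ℝ} {P : MvPolynomial (Fin n) ℝ}

theorem continuous_fdens (k : ℕ) (σ ε : ℝ) (P : MvPolynomial (Fin n) ℝ) :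
    Continuous (fdens n k σ ε P) := by
  have hrenorm := continuous_renorm P
  unfold fdens
  fun_prop

theorem abs_mul_renorm_mul_exp_le_one {k : ℕ} {ε : ℝ} (hσ : 0 < σ)
    (hε : |ε| ≤ (Kconst n k σ P)⁻¹) (x : Fin n → ℝ) :
    |ε| * ((σ ^ (n + 2 * k))⁻¹ * |renorm P x| *
      Real.exp (-(1 - σ ^ 2) * (∑ i, x i ^ 2) / 2)) ≤ 1 := by
  rcases (abs_nonneg ε).eq_or_lt with hzero | hpos
  · simp [← hzero]
  have hK : 0 < Kconst n k σ P := inv_pos.mp (hpos.trans_le hε)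
  -- `⨆` of an unbounded family of reals is `0`, so positivity of `Kconst` gives boundedness.
  have hbdd : BddAbove (Set.range fun x : Fin n → ℝ => (σ ^ (n + 2 * k))⁻¹ * |renorm P x| *
      Real.exp (-(1 - σ ^ 2) * (∑ i, x i ^ 2) / 2)) := by
    by_contra hunbdd
    exact hK.ne' (Real.iSup_of_not_bddAbove hunbdd)
  calc _ ≤ (Kconst n k σ P)⁻¹ * Kconst n k σ P :=
        mul_le_mul hε (le_ciSup hbdd x) (by positivity) (by positivity)
    _ = 1 := inv_mul_cancel₀ hK.ne'

theorem fdens_nonneg {k : ℕ} {ε : ℝ} (hσ : 0 < σ) (hε : |ε| ≤ (Kconst n k σ P)⁻¹)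
    (x : Fin n → ℝ) : 0 ≤ fdens n k σ ε P x := by
  have hbound := abs_mul_renorm_mul_exp_le_one hσ hε fun i => x i / σ
  have hexponent : -(1 - σ ^ 2) * (∑ i, (x i / σ) ^ 2) / 2 =
      -(1 - σ ^ 2) * (∑ i, x i ^ 2) / (2 * σ ^ 2) := by
    simp only [div_pow, ← Finset.sum_div]
    field_simp
  have habs : |(-1) ^ k * ε * (σ ^ (n + 2 * k))⁻¹ * renorm P (fun i => x i / σ) *
      Real.exp (-(1 - σ ^ 2) * (∑ i, x i ^ 2) / (2 * σ ^ 2))| ≤ 1 := by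
    simpa only [abs_mul, abs_pow, abs_neg, abs_one, one_pow, one_mul, Real.abs_exp, abs_inv,
      abs_of_pos hσ, hexponent, mul_assoc] using hbound
  exact mul_nonneg (by positivity) (by linarith [(abs_le.mp habs).1])

theorem fdens_eq_renormGaussian (k : ℕ) (hσ : σ ≠ 0) (ε : ℝ) (x : Fin n → ℝ) :
    fdens n k σ ε P x = (2 * π) ^ (-(n : ℝ) / 2) * (renormGaussian 1 x +
      (-1) ^ k * ε * (σ ^ (n + 2 * k))⁻¹ * renormGaussian P fun i => x i / σ) := by
  have hexp : Real.exp (-(∑ i, (x i / σ) ^ 2) / 2) = Real.exp (-(∑ i, x i ^ 2) / 2) *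
      Real.exp (-(1 - σ ^ 2) * (∑ i, x i ^ 2) / (2 * σ ^ 2)) := by
    rw [← Real.exp_add]
    simp only [div_pow, ← Finset.sum_div]
    congr 1
    field_simp
    ring
  rw [fdens, renormGaussian, renormGaussian, hexp, renorm_one]
  ring

theorem integral_cexp_mul_renormGaussian_comp_div {k : ℕ} (hσ : 0 < σ)
    (hP : P.IsHomogeneous (2 * k)) (t : Fin n → ℝ) :
    ∫ x : Fin n → ℝ, Complex.exp (Complex.I * ((∑ i, t i * x i : ℝ) : ℂ)) *
        (renormGaussian P (fun i => x i / σ) : ℂ) =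
      ((-1) ^ k * σ ^ (n + 2 * k) * √(2 * π) ^ n *
        (Real.exp (-σ ^ 2 * (∑ i, t i ^ 2) / 2) * MvPolynomial.eval t P) : ℝ) := by
  have hpow : (Complex.I * σ) ^ (2 * k) = ((-1) ^ k * σ ^ (2 * k) : ℝ) := by
    rw [mul_pow, pow_mul, Complex.I_sq]
    push_cast
    rfl
  have heval : MvPolynomial.aeval (fun i => (t i : ℂ)) P = (MvPolynomial.eval t P : ℂ) :=
    MvPolynomial.aeval_algebraMap_apply ℂ t P
  have hsq : -∑ i, (σ * t i) ^ 2 = -σ ^ 2 * ∑ i, t i ^ 2 := by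
    simp only [mul_pow, ← Finset.mul_sum, neg_mul]
  rw [integral_cexp_mul_comp_div (fun x => (renormGaussian P x : ℂ)) hσ.ne',
    integral_cexp_mul_renormGaussian, hsq, Fintype.card_fin, abs_of_pos hσ]
  simp only [Complex.ofReal_mul σ, ← mul_assoc Complex.I]
  rw [aeval_const_mul_of_isHomogeneous hP, heval, hpow]
  push_cast
  ring

theorem rpow_neg_div_two_mul_sqrt_pow {y : ℝ} (hy : 0 < y) (n : ℕ) :
    y ^ (-(n : ℝ) / 2) * √y ^ n = 1 := by
  rw [Real.sqrt_eq_rpow, ← Real.rpow_mul_natCast hy.le, ← Real.rpow_add hy]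
  ring_nf
  exact Real.rpow_zero y

theorem integral_cexp_mul_fdens {k : ℕ} (hσ : 0 < σ) (hP : P.IsHomogeneous (2 * k)) (ε : ℝ)
    (t : Fin n → ℝ) :
    ∫ x, Complex.exp (Complex.I * ((∑ i, t i * x i : ℝ) : ℂ)) * (fdens n k σ ε P x : ℂ) =
      perturbedCharFun σ ε P t := by
  have hgauss := integral_cexp_mul_renormGaussian (1 : MvPolynomial (Fin n) ℝ) t
  have hgauss_int : Integrable fun x : Fin n → ℝ =>
      Complex.exp (Complex.I * ((∑ i, t i * x i : ℝ) : ℂ)) * (renormGaussian 1 x : ℂ) :=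
    integrable_cexp_sum_mul (integrable_renormGaussian 1).ofReal t
  have hsign : ((-1 : ℝ) ^ k) * (-1) ^ k = 1 := by rw [← mul_pow]; norm_num
  have hscale : (σ ^ (n + 2 * k))⁻¹ * σ ^ (n + 2 * k) = 1 := inv_mul_cancel₀ (by positivity)
  have hsplit (x : Fin n → ℝ) :
      Complex.exp (Complex.I * ((∑ i, t i * x i : ℝ) : ℂ)) * (fdens n k σ ε P x : ℂ) =
        (((2 * π) ^ (-(n : ℝ) / 2) : ℝ) : ℂ) *
          (Complex.exp (Complex.I * ((∑ i, t i * x i : ℝ) : ℂ)) * (renormGaussian 1 x : ℂ) +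
          (((-1) ^ k * ε * (σ ^ (n + 2 * k))⁻¹ : ℝ) : ℂ) *
            (Complex.exp (Complex.I * ((∑ i, t i * x i : ℝ) : ℂ)) *
              (renormGaussian P (fun i => x i / σ) : ℂ))) := by
    rw [fdens_eq_renormGaussian k hσ.ne', Complex.ofReal_mul, Complex.ofReal_add,
      Complex.ofReal_mul ((-1) ^ k * ε * _)]
    ring
  simp only [hsplit]
  rw [integral_const_mul, integral_add hgauss_int
      ((integrable_cexp_mul_renormGaussian_comp_div P hσ.ne' t).const_mul _),
    integral_const_mul, hgauss, integral_cexp_mul_renormGaussian_comp_div hσ hP, map_one, one_mul]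
  simp only [← Complex.ofReal_mul, ← Complex.ofReal_add, Complex.ofReal_inj]
  set w : ℝ := (-1) ^ k
  set c := (2 * π) ^ (-(n : ℝ) / 2)
  set E := Real.exp (-σ ^ 2 * (∑ i, t i ^ 2) / 2) * MvPolynomial.eval t P with hE
  calc c * (√(2 * π) ^ n * Real.exp (-(∑ i, t i ^ 2) / 2) +
        w * ε * (σ ^ (n + 2 * k))⁻¹ * (w * σ ^ (n + 2 * k) * √(2 * π) ^ n * E))
      = c * √(2 * π) ^ n * (Real.exp (-(∑ i, t i ^ 2) / 2) +
          w * w * ((σ ^ (n + 2 * k))⁻¹ * σ ^ (n + 2 * k)) * (ε * E)) := by ring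
    _ = perturbedCharFun σ ε P t := by
      rw [rpow_neg_div_two_mul_sqrt_pow Real.two_pi_pos, hsign, hscale, perturbedCharFun, hE]
      ring

theorem integral_cexp_withDensity_fdens {k : ℕ} {ε : ℝ} (hσ : 0 < σ)
    (hP : P.IsHomogeneous (2 * k)) (hε : |ε| ≤ (Kconst n k σ P)⁻¹) (t : Fin n → ℝ) :
    ∫ x, Complex.exp (Complex.I * ((∑ i, t i * x i : ℝ) : ℂ))
        ∂(volume.withDensity fun x => ENNReal.ofReal (fdens n k σ ε P x)) =
      perturbedCharFun σ ε P t := by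
  rw [integral_withDensity_eq_integral_toReal_smul
    (continuous_fdens k σ ε P).measurable.ennreal_ofReal (by simp), ← integral_cexp_mul_fdens hσ hP]
  simp only [ENNReal.toReal_ofReal (fdens_nonneg hσ hε _), Complex.real_smul, mul_comm]

end Density

/-- For ε ≠ 0, the probability measure μ with density f(·;ε,σ,P) is not Gaussian: its
characteristic function is not of the form t ↦ exp(i mᵀt − tᵀΣt/2) with Σ positive
semidefinite. -/
theorem stmt_7 (n k : ℕ) (σ : ℝ) (hσ0 : 0 < σ) (hσ1 : σ < 1)
    (P : MvPolynomial (Fin n) ℝ) (hP : P.IsHomogeneous (2 * k)) (hP0 : P ≠ 0)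
    (ε : ℝ) (hε : |ε| ≤ (Kconst n k σ P)⁻¹) (hε0 : ε ≠ 0)
    (μ : Measure (Fin n → ℝ))
    (hμ : μ = volume.withDensity (fun x => ENNReal.ofReal (fdens n k σ ε P x))) :
    ¬ ∃ (m : Fin n → ℝ) (S : Matrix (Fin n) (Fin n) ℝ), S.PosSemidef ∧
      ∀ t : Fin n → ℝ,
        (∫ x, Complex.exp (Complex.I * ((∑ i, t i * x i : ℝ) : ℂ)) ∂μ)
          = Complex.exp (Complex.I * ((∑ i, m i * t i : ℝ) : ℂ)
              - ((∑ i, ∑ j, t i * S i j * t j : ℝ) : ℂ) / 2) := by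
  rintro ⟨m, S, -, hgauss⟩
  refine not_forall_perturbedCharFun_eq_gaussian (pow_le_one₀ hσ0.le hσ1.le) hε0 hP hP0 m S
    fun t => ?_
  rw [← hgauss t, hμ, integral_cexp_withDensity_fdens hσ0 hP hε]
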